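/- Let G_A = (V_A, E_A) and G_B = (V_B, E_B) be nonempty finite directed graphs that are isomorphic. Then the graph similarity computed from the limit scores of the neighbor matching iteration satisfies s(G_A, G_B) = 1. -/

import Mathlib

/-!
If every weight is at most `1`, a matching of `A` and `B` weighs at most `|A|`, because its pairs have
distinct first components. Hence each normalised score is at most `1`, and so are all the iterates.
If moreover `f : A → B` is a bijection with `w a (f a) = 1` for all `a ∈ A`, the graph of `f` is a
matching of weight `|A| = |B|`, so `W(A, B, w) = |A|` (`optWeight_eq_card`).

An isomorphism `f` restricts to bijections `In(i) → In(f i)` and `Out(i) → Out(f i)`. By induction on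
`k` the iterates satisfy `x^k_{i, f i} = 1`, so in the limit `x_{i, f i} = 1` and `x_{ij} ≤ 1`.
Applying `optWeight_eq_card` to the full vertex sets gives `W(V_A, V_B, x) = |V_A| = |V_B|`.
-/

open Finset Filter Topology

/-- A matching of finite sets `A` and `B`: a set of pairs, each with first
component in `A` and second in `B`, such that no element of either set occurs
in more than one pair. -/
def IsMatching {α β : Type*} (A : Finset α) (B : Finset β) (M : Finset (α × β)) : Prop :=
  (∀ p ∈ M, p.1 ∈ A ∧ p.2 ∈ B) ∧
  (∀ p ∈ M, ∀ q ∈ M, p.1 = q.1 → p = q) ∧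
  (∀ p ∈ M, ∀ q ∈ M, p.2 = q.2 → p = q)

open Classical in
/-- The optimal matching weight `W(A,B,w)`: the maximum over all matchings `M`
of `A` and `B` of the total weight `∑ (a,b) ∈ M, w a b` (the empty matching is allowed). -/
noncomputable def optWeight {α β : Type*} (A : Finset α) (B : Finset β)
    (w : α → β → ℝ) : ℝ :=
  ((A ×ˢ B).powerset.filter fun M => IsMatching A B M).sup'
    ⟨∅, by simp [IsMatching]⟩ (fun M => ∑ p ∈ M, w p.1 p.2)

open Classical in
/-- The in-neighbors of node `i` in the directed graph with nodes `V` and edges `E`. -/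
noncomputable def inNbrs {α : Type*} (V : Finset α) (E : Finset (α × α)) (i : α) : Finset α :=
  V.filter fun p => (p, i) ∈ E

open Classical in
/-- The out-neighbors of node `i` in the directed graph with nodes `V` and edges `E`. -/
noncomputable def outNbrs {α : Type*} (V : Finset α) (E : Finset (α × α)) (i : α) : Finset α :=
  V.filter fun q => (i, q) ∈ E

/-- In-similarity of `i ∈ V_A` and `j ∈ V_B` computed from the similarity matrix `x`:
`W(In(i), In(j), x) / max(id(i), id(j))` when `max(id(i), id(j)) > 0`, and `1` otherwise. -/
noncomputable def sIn {α β : Type*} (VA : Finset α) (EA : Finset (α × α))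
    (VB : Finset β) (EB : Finset (β × β)) (x : α → β → ℝ) (i : α) (j : β) : ℝ :=
  if max (inNbrs VA EA i).card (inNbrs VB EB j).card = 0 then 1
  else optWeight (inNbrs VA EA i) (inNbrs VB EB j) x /
    (max (inNbrs VA EA i).card (inNbrs VB EB j).card : ℝ)

/-- Out-similarity of `i ∈ V_A` and `j ∈ V_B` computed from the similarity matrix `x`:
`W(Out(i), Out(j), x) / max(od(i), od(j))` when `max(od(i), od(j)) > 0`, and `1` otherwise. -/
noncomputable def sOut {α β : Type*} (VA : Finset α) (EA : Finset (α × α))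
    (VB : Finset β) (EB : Finset (β × β)) (x : α → β → ℝ) (i : α) (j : β) : ℝ :=
  if max (outNbrs VA EA i).card (outNbrs VB EB j).card = 0 then 1
  else optWeight (outNbrs VA EA i) (outNbrs VB EB j) x /
    (max (outNbrs VA EA i).card (outNbrs VB EB j).card : ℝ)

/-- The neighbor matching update operator: `F(x)_{ij} = (s_in(i,j;x) + s_out(i,j;x)) / 2`. -/
noncomputable def nmUpdate {α β : Type*} (VA : Finset α) (EA : Finset (α × α))
    (VB : Finset β) (EB : Finset (β × β)) (x : α → β → ℝ) : α → β → ℝ :=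
  fun i j => (sIn VA EA VB EB x i j + sOut VA EA VB EB x i j) / 2

/-- The neighbor matching iteration: `x⁰_{ij} = 1` and `x^{k+1} = F(x^k)`. -/
noncomputable def nmIter {α β : Type*} (VA : Finset α) (EA : Finset (α × α))
    (VB : Finset β) (EB : Finset (β × β)) : ℕ → α → β → ℝ
  | 0 => fun _ _ => 1
  | k + 1 => nmUpdate VA EA VB EB (nmIter VA EA VB EB k)

theorem optWeight_le_card {α β : Type*} {A : Finset α} {B : Finset β} {w : α → β → ℝ}
    (hw : ∀ a ∈ A, ∀ b ∈ B, w a b ≤ 1) : optWeight A B w ≤ A.card := by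
  classical
  unfold optWeight
  refine Finset.sup'_le _ _ fun M hM => ?_
  obtain ⟨hAB, hfst, -⟩ := (Finset.mem_filter.1 hM).2
  have hcard : M.card ≤ A.card :=
    Finset.card_le_card_of_injOn Prod.fst (fun p hp => (hAB p hp).1)
      fun p hp q hq h => hfst p hp q hq h
  calc ∑ p ∈ M, w p.1 p.2 ≤ ∑ _p ∈ M, (1 : ℝ) :=
        Finset.sum_le_sum fun p hp => hw _ (hAB p hp).1 _ (hAB p hp).2
    _ = M.card := by simp
    _ ≤ A.card := by exact_mod_cast hcard

/-- The graph of a bijection is a matching, so its weight bounds the optimal weight from below. -/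
theorem sum_le_optWeight {α β : Type*} {A : Finset α} {B : Finset β} (w : α → β → ℝ)
    {f : α → β} (hf : Set.BijOn f A B) : ∑ a ∈ A, w a (f a) ≤ optWeight A B w := by
  classical
  have hsum : ∑ a ∈ A, w a (f a) = ∑ p ∈ A.image (fun a => (a, f a)), w p.1 p.2 := by
    rw [Finset.sum_image]
    intro a _ b _ h
    exact (Prod.ext_iff.1 h).1
  have hM : IsMatching A B (A.image fun a => (a, f a)) := by
    refine ⟨?_, ?_, ?_⟩
    · intro p hp
      obtain ⟨a, ha, rfl⟩ := Finset.mem_image.1 hp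
      exact ⟨ha, hf.mapsTo ha⟩
    · intro p hp q hq h
      obtain ⟨a, ha, rfl⟩ := Finset.mem_image.1 hp
      obtain ⟨b, hb, rfl⟩ := Finset.mem_image.1 hq
      obtain rfl : a = b := h
      rfl
    · intro p hp q hq h
      obtain ⟨a, ha, rfl⟩ := Finset.mem_image.1 hp
      obtain ⟨b, hb, rfl⟩ := Finset.mem_image.1 hq
      obtain rfl : a = b := hf.injOn ha hb h
      rfl
  rw [hsum]
  unfold optWeight
  refine Finset.le_sup' (fun M : Finset (α × β) => ∑ p ∈ M, w p.1 p.2)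
    (Finset.mem_filter.2 ⟨Finset.mem_powerset.2 fun p hp => ?_, hM⟩)
  exact Finset.mem_product.2 (hM.1 p hp)

theorem optWeight_eq_card {α β : Type*} {A : Finset α} {B : Finset β} {w : α → β → ℝ}
    {f : α → β} (hf : Set.BijOn f A B) (hw : ∀ a ∈ A, ∀ b ∈ B, w a b ≤ 1)
    (hone : ∀ a ∈ A, w a (f a) = 1) : optWeight A B w = A.card := by
  refine le_antisymm (optWeight_le_card hw) ?_
  calc (A.card : ℝ) = ∑ a ∈ A, w a (f a) := by simp [Finset.sum_congr rfl hone]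
    _ ≤ _ := sum_le_optWeight w hf

theorem card_eq_of_bijOn {α β : Type*} {A : Finset α} {B : Finset β} {f : α → β}
    (hf : Set.BijOn f A B) : A.card = B.card :=
  Finset.card_nbij f hf.mapsTo hf.injOn hf.surjOn

/-- The normalised matching score, the common form of `sIn` and `sOut`, is at most `1` when the
weights are. -/
theorem score_le_one {α β : Type*} {A : Finset α} {B : Finset β} {w : α → β → ℝ}
    (hw : ∀ a b, w a b ≤ 1) :
    (if max A.card B.card = 0 then 1
      else optWeight A B w / (max A.card B.card : ℝ)) ≤ 1 := by
  split_ifs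
  · exact le_rfl
  · exact div_le_one_of_le₀
      ((optWeight_le_card fun a _ b _ => hw a b).trans (le_max_left _ _)) (by positivity)

theorem score_eq_one {α β : Type*} {A : Finset α} {B : Finset β} {w : α → β → ℝ}
    {f : α → β} (hf : Set.BijOn f A B) (hw : ∀ a b, w a b ≤ 1)
    (hone : ∀ a ∈ A, w a (f a) = 1) :
    (if max A.card B.card = 0 then 1
      else optWeight A B w / (max A.card B.card : ℝ)) = 1 := by
  rw [optWeight_eq_card hf (fun a _ b _ => hw a b) hone, ← card_eq_of_bijOn hf]
  split_ifs with h
  · rfl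
  · rw [max_self] at h ⊢
    exact div_self (by exact_mod_cast h)

theorem nmIter_le_one {α β : Type*} (VA : Finset α) (EA : Finset (α × α))
    (VB : Finset β) (EB : Finset (β × β)) (k : ℕ) (i : α) (j : β) :
    nmIter VA EA VB EB k i j ≤ 1 := by
  induction k generalizing i j with
  | zero => exact le_rfl
  | succ k ih =>
    have h₁ : sIn VA EA VB EB (nmIter VA EA VB EB k) i j ≤ 1 := score_le_one ih
    have h₂ : sOut VA EA VB EB (nmIter VA EA VB EB k) i j ≤ 1 := score_le_one ih
    simp only [nmIter, nmUpdate]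
    linarith

/-- A bijection `A → B` compatible with two predicates restricts to the filtered subsets. -/
theorem bijOn_filter {α β : Type*} {A : Finset α} {B : Finset β} {f : α → β}
    (hf : Set.BijOn f A B) {p : α → Prop} {q : β → Prop} [DecidablePred p] [DecidablePred q]
    (hpq : ∀ a ∈ A, (p a ↔ q (f a))) : Set.BijOn f (A.filter p) (B.filter q) := by
  refine ⟨fun a ha => ?_, hf.injOn.mono fun a ha => (Finset.mem_filter.1 ha).1, fun b hb => ?_⟩
  · obtain ⟨ha, hpa⟩ := Finset.mem_filter.1 ha
    exact Finset.mem_filter.2 ⟨hf.mapsTo ha, (hpq a ha).1 hpa⟩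
  · obtain ⟨hb, hqb⟩ := Finset.mem_filter.1 hb
    obtain ⟨a, ha, rfl⟩ := hf.surjOn hb
    exact ⟨a, Finset.mem_filter.2 ⟨ha, (hpq a ha).2 hqb⟩, rfl⟩

theorem nmIter_iso_eq_one {α β : Type*} {VA : Finset α} {EA : Finset (α × α)}
    {VB : Finset β} {EB : Finset (β × β)} {f : α → β} (hbij : Set.BijOn f VA VB)
    (hiso : ∀ i ∈ VA, ∀ j ∈ VA, ((i, j) ∈ EA ↔ (f i, f j) ∈ EB))
    (k : ℕ) {i : α} (hi : i ∈ VA) : nmIter VA EA VB EB k i (f i) = 1 := by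
  classical
  induction k generalizing i with
  | zero => rfl
  | succ k ih =>
    have h₁ : sIn VA EA VB EB (nmIter VA EA VB EB k) i (f i) = 1 :=
      score_eq_one (bijOn_filter hbij fun a ha => hiso a ha i hi) (nmIter_le_one VA EA VB EB k)
        fun a ha => ih (Finset.mem_filter.1 ha).1
    have h₂ : sOut VA EA VB EB (nmIter VA EA VB EB k) i (f i) = 1 :=
      score_eq_one (bijOn_filter hbij fun a ha => hiso i hi a ha) (nmIter_le_one VA EA VB EB k)
        fun a ha => ih (Finset.mem_filter.1 ha).1
    simp only [nmIter, nmUpdate, h₁, h₂]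
    norm_num

/-- If the nonempty finite directed graphs `G_A` and `G_B` are isomorphic, then
the graph similarity `s(G_A,G_B) = W(V_A, V_B, x) / min(|V_A|,|V_B|)` computed
from the limit scores `x` of the neighbor matching iteration equals `1`. -/
theorem graphSim_eq_one_of_isomorphic {α β : Type*} (VA : Finset α) (EA : Finset (α × α))
    (VB : Finset β) (EB : Finset (β × β))
    (hEA : EA ⊆ VA ×ˢ VA) (hEB : EB ⊆ VB ×ˢ VB)
    (hVA : VA.Nonempty) (hVB : VB.Nonempty)
    (f : α → β) (hbij : Set.BijOn f ↑VA ↑VB)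
    (hiso : ∀ i ∈ VA, ∀ j ∈ VA, ((i, j) ∈ EA ↔ (f i, f j) ∈ EB))
    (x : α → β → ℝ)
    (hx : ∀ i ∈ VA, ∀ j ∈ VB,
      Tendsto (fun k => nmIter VA EA VB EB k i j) atTop (𝓝 (x i j))) :
    optWeight VA VB x / (min VA.card VB.card : ℝ) = 1 := by
  have hle : ∀ i ∈ VA, ∀ j ∈ VB, x i j ≤ 1 := fun i hi j hj =>
    le_of_tendsto' (hx i hi j hj) fun k => nmIter_le_one VA EA VB EB k i j
  have hone : ∀ i ∈ VA, x i (f i) = 1 := fun i hi =>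
    tendsto_nhds_unique (hx i hi (f i) (hbij.mapsTo hi))
      (by simp only [nmIter_iso_eq_one hbij hiso _ hi]; exact tendsto_const_nhds)
  rw [optWeight_eq_card hbij hle hone, ← card_eq_of_bijOn hbij, min_self]
  exact div_self (by exact_mod_cast hVA.card_pos.ne')
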